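/- For every k-cd c̄ for n nodes (n ≥ 1) and every m ∈ M(c̄), the expected number of nodes not colored m after one step of the 3-majority dynamics, μ̄_m(c̄) = n − μ_m(c̄), satisfies (n − c_m)·(1 − c_m²/n²) ≤ μ̄_m(c̄) ≤ (n − c_m)·(1 − s(c̄)·c_m/n²). -/

import Mathlib

open Finset

/-- The color appearing at least twice among `x, y, z`, or `x` if all three are distinct. -/
def maj3 {k : ℕ} (x y z : Fin k) : Fin k := if y = z then y else x

/-- Number of nodes with color `j` in the assignment `a`. -/
def cnt {n k : ℕ} (a : Fin n → Fin k) (j : Fin k) : ℕ :=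
  (Finset.univ.filter (fun i => a i = j)).card

/-- One sample for a round of the 3-majority dynamics: each node picks three nodes
(uniformly at random, with replacement). -/
abbrev Sample (n : ℕ) := Fin n → Fin n × Fin n × Fin n

/-- The assignment obtained from `a` after one step of the 3-majority dynamics with samples `S`. -/
def stepA {n k : ℕ} (a : Fin n → Fin k) (S : Sample n) : Fin n → Fin k :=
  fun i => maj3 (a (S i).1) (a (S i).2.1) (a (S i).2.2)

/-- Probability that the event `E` holds for the configuration obtained from `a`
after one step of the 3-majority dynamics (samples are uniform and independent). -/
noncomputable def stepPr {n k : ℕ} (a : Fin n → Fin k) (E : (Fin n → Fin k) → Prop) : ℝ :=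
  (Nat.card {S : Sample n // E (stepA a S)} : ℝ) / (Nat.card (Sample n) : ℝ)

/-- Expectation of `f` of the configuration obtained from `a` after one step of the
3-majority dynamics. -/
noncomputable def stepE {n k : ℕ} (a : Fin n → Fin k) (f : (Fin n → Fin k) → ℝ) : ℝ :=
  (∑ S : Sample n, f (stepA a S)) / (Nat.card (Sample n) : ℝ)

/-- `m(c̄)`: the size of the largest color class. -/
def mval {k : ℕ} (c : Fin k → ℕ) : ℕ := Finset.univ.sup c

/-- `M(c̄)`: the set of colors attaining the maximum. -/
def Mset {k : ℕ} (c : Fin k → ℕ) : Finset (Fin k) :=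
  Finset.univ.filter (fun j => c j = mval c)

/-- `s(c̄)`: the bias, i.e. the gap between the (unique) maximum and the second largest
color class; `0` if the maximum is not unique. -/
def sval {k : ℕ} (c : Fin k → ℕ) : ℕ :=
  if (Mset c).card = 1 then mval c - (Finset.univ \ Mset c).sup c else 0

/-- `α(c̄) = (n − m(c̄))·s(c̄)/n²`. -/
noncomputable def alphaV (n : ℕ) {k : ℕ} (c : Fin k → ℕ) : ℝ :=
  ((n : ℝ) - mval c) * sval c / (n : ℝ) ^ 2

/-- `γ(c̄) = (n·m(c̄) − Σ_h c_h²)/n² − α(c̄)`. -/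
noncomputable def gammaV (n : ℕ) {k : ℕ} (c : Fin k → ℕ) : ℝ :=
  ((n : ℝ) * mval c - ∑ h, (c h : ℝ) ^ 2) / (n : ℝ) ^ 2 - alphaV n c

/-- The trajectory of the 3-majority dynamics started at `a`, driven by the samples `S`
for the first `N` rounds. -/
def trajA {n k N : ℕ} (a : Fin n → Fin k) (S : Fin N → Sample n) : ℕ → Fin n → Fin k
  | 0 => a
  | t + 1 => if h : t < N then stepA (trajA a S t) (S ⟨t, h⟩) else trajA a S t

/-- Probability of an event `E` for an `N`-round run of the 3-majority dynamics
(all samples of all rounds are uniform and independent). -/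
noncomputable def runPr {n k : ℕ} (N : ℕ) (a : Fin n → Fin k)
    (E : (Fin N → Sample n) → Prop) : ℝ :=
  (Nat.card {S : Fin N → Sample n // E S} : ℝ) / (Nat.card (Fin N → Sample n) : ℝ)

/-!
Let `c h` be the number of nodes colored `h` and `p h = c h / n` the probability that a uniform
sample has color `h`. Three samples produce the color `m` when the last two are both `m`, or when
the last two disagree and the first is `m`, so a node becomes `m`-colored with probability
`p m ^ 2 + p m * (1 - ∑ h, p h ^ 2)`. Hence the expected number of nodes of other colors is
`(n - c m) - c m * (n * c m - ∑ h, c h ^ 2) / n ^ 2`, and both bounds amount to bounds on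
`n * c m - ∑ h, c h ^ 2`: it is at most `n * c m - c m ^ 2`, and, being `∑ h, c h * (c m - c h)`,
at least `(n - c m) * s` if `m` leads every other color by `s`.
-/

open scoped BigOperators

theorem expect_pi_apply {ι M : Type*} {κ : ι → Type*} [Fintype ι] [DecidableEq ι]
    [∀ i, Fintype (κ i)] [∀ i, Nonempty (κ i)] [AddCommMonoid M] [Module ℚ≥0 M]
    (i : ι) (g : κ i → M) :
    𝔼 f : ∀ j, κ j, g (f i) = 𝔼 x, g x := by
  calc 𝔼 f : ∀ j, κ j, g (f i)
      = 𝔼 p : κ i × (∀ j : {j // j ≠ i}, κ j), g p.1 :=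
        Fintype.expect_equiv (Equiv.piSplitAt i κ) _ _ fun _ => rfl
    _ = 𝔼 x, 𝔼 _f : ∀ j : {j // j ≠ i}, κ j, g x := by
        rw [← univ_product_univ, expect_product]
    _ = 𝔼 x, g x := by simp only [Fintype.expect_const]

theorem sum_sub_mul_le_sum_mul_sub_sum_sq {ι R : Type*} [Fintype ι] [CommRing R] [PartialOrder R]
    [IsOrderedRing R] {w : ι → R} (hw : 0 ≤ w) {m : ι} {s : R}
    (hs : ∀ h ≠ m, w h + s ≤ w m) :
    (∑ h, w h - w m) * s ≤ (∑ h, w h) * w m - ∑ h, w h ^ 2 := by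
  classical
  calc (∑ h, w h - w m) * s
      = ∑ h ∈ univ.erase m, w h * s := by
        rw [← sum_mul, sum_erase_eq_sub (mem_univ m)]
    _ ≤ ∑ h ∈ univ.erase m, w h * (w m - w h) := sum_le_sum fun h hh =>
        mul_le_mul_of_nonneg_left (le_sub_iff_add_le'.2 (hs h (ne_of_mem_erase hh))) (hw h)
    _ = ∑ h, w h * (w m - w h) := sum_erase _ (by simp)
    _ = (∑ h, w h) * w m - ∑ h, w h ^ 2 := by
        simp only [mul_sub, sum_sub_distrib, sum_mul, sq]

theorem sval_add_le_of_mem_Mset {k : ℕ} {c : Fin k → ℕ} {m h : Fin k} (hm : m ∈ Mset c)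
    (hh : h ≠ m) : c h + sval c ≤ c m := by
  have hcm : c m = mval c := (mem_filter.1 hm).2
  have hch : c h ≤ mval c := le_sup (mem_univ h)
  unfold sval
  split_ifs with hcard
  · have hM : Mset c = {m} := eq_singleton_iff_unique_mem.2
      ⟨hm, fun x hx => card_le_one.1 hcard.le x hx m hm⟩
    have : c h ≤ (univ \ Mset c).sup c := le_sup (by simp [hM, hh])
    omega
  · omega

theorem ite_maj3_eq {k : ℕ} (x y z m : Fin k) :
    (if maj3 x y z = m then (1 : ℝ) else 0) =
      (if y = m then 1 else 0) * (if z = m then 1 else 0) +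
        (if x = m then 1 else 0) * (1 - if y = z then 1 else 0) := by
  by_cases hyz : y = z
  · simp [maj3, hyz]
  · have : z = m → y ≠ m := fun hz hy => hyz (hy.trans hz.symm)
    simpa [maj3, hyz] using this

section Step

variable {n k : ℕ} (a : Fin n → Fin k)

theorem sum_cnt : ∑ h, cnt a h = n := by
  simpa [cnt] using (card_eq_sum_card_fiberwise (s := univ) fun i _ => mem_univ (a i)).symm

theorem cast_cnt (h : Fin k) : (cnt a h : ℝ) = ∑ i, if a i = h then 1 else 0 := by
  simp [cnt]

theorem expect_color_eq (h : Fin k) :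
    𝔼 i, (if a i = h then (1 : ℝ) else 0) = cnt a h / n := by
  rw [Fintype.expect_eq_sum_div_card, ← cast_cnt, Fintype.card_fin]

theorem expect_color_eq_color :
    𝔼 i, 𝔼 j, (if a i = a j then (1 : ℝ) else 0) = ∑ h, ((cnt a h : ℝ) / n) ^ 2 := by
  have ite_eq_sum (i j : Fin n) : (if a i = a j then (1 : ℝ) else 0) =
      ∑ h, (if a i = h then 1 else 0) * (if a j = h then 1 else 0) := by
    simp [eq_comm]
  simp only [ite_eq_sum, expect_sum_comm, ← Fintype.expect_mul_expect, expect_color_eq, sq]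

theorem stepE_eq_expect (f : (Fin n → Fin k) → ℝ) :
    stepE a f = 𝔼 S : Sample n, f (stepA a S) := by
  rw [stepE, Fintype.expect_eq_sum_div_card, Nat.card_eq_fintype_card]

variable [NeZero n]

theorem expect_maj3_eq (m : Fin k) :
    𝔼 x, 𝔼 y, 𝔼 z, (if maj3 (a x) (a y) (a z) = m then (1 : ℝ) else 0) =
      (cnt a m / n : ℝ) ^ 2 + cnt a m / n * (1 - ∑ h, (cnt a h / n : ℝ) ^ 2) := by
  simp only [ite_maj3_eq, expect_add_distrib, expect_sub_distrib, ← mul_expect, ← expect_mul,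
    Fintype.expect_const, expect_color_eq, expect_color_eq_color, sq]

theorem expect_stepA_eq (i : Fin n) (m : Fin k) :
    𝔼 S : Sample n, (if stepA a S i = m then (1 : ℝ) else 0) =
      (cnt a m / n : ℝ) ^ 2 + cnt a m / n * (1 - ∑ h, (cnt a h / n : ℝ) ^ 2) := by
  calc 𝔼 S : Sample n, (if stepA a S i = m then (1 : ℝ) else 0)
      = 𝔼 t : Fin n × Fin n × Fin n, if maj3 (a t.1) (a t.2.1) (a t.2.2) = m then 1 else 0 :=
        expect_pi_apply (κ := fun _ => Fin n × Fin n × Fin n) i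
          fun t => if maj3 (a t.1) (a t.2.1) (a t.2.2) = m then 1 else 0
    _ = 𝔼 x, 𝔼 y, 𝔼 z, if maj3 (a x) (a y) (a z) = m then 1 else 0 := by
        simp only [← univ_product_univ, expect_product]
    _ = (cnt a m / n : ℝ) ^ 2 + cnt a m / n * (1 - ∑ h, (cnt a h / n : ℝ) ^ 2) :=
        expect_maj3_eq a m

theorem stepE_cnt (m : Fin k) :
    stepE a (fun b => (cnt b m : ℝ)) =
      n * ((cnt a m / n : ℝ) ^ 2 + cnt a m / n * (1 - ∑ h, (cnt a h / n : ℝ) ^ 2)) := by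
  simp only [stepE_eq_expect, cast_cnt (stepA a _), expect_sum_comm, expect_stepA_eq, sum_const,
    card_univ, Fintype.card_fin, nsmul_eq_mul]

theorem sub_stepE_cnt (m : Fin k) :
    n - stepE a (fun b => (cnt b m : ℝ)) =
      (n - cnt a m : ℝ) - cnt a m * (n * cnt a m - ∑ h, (cnt a h : ℝ) ^ 2) / n ^ 2 := by
  have hn : (n : ℝ) ≠ 0 := NeZero.ne _
  simp only [stepE_cnt, div_pow, ← sum_div]
  field_simp
  ring

theorem le_sub_stepE_cnt (m : Fin k) :
    (n - cnt a m : ℝ) * (1 - (cnt a m : ℝ) ^ 2 / n ^ 2) ≤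
      n - stepE a (fun b => (cnt b m : ℝ)) := by
  have hsq : (cnt a m : ℝ) ^ 2 ≤ ∑ h, (cnt a h : ℝ) ^ 2 :=
    single_le_sum (f := fun h => (cnt a h : ℝ) ^ 2) (fun _ _ => sq_nonneg _) (mem_univ m)
  calc (n - cnt a m : ℝ) * (1 - (cnt a m : ℝ) ^ 2 / n ^ 2)
      = (n - cnt a m : ℝ) - cnt a m * (n * cnt a m - (cnt a m : ℝ) ^ 2) / n ^ 2 := by ring
    _ ≤ (n - cnt a m : ℝ) - cnt a m * (n * cnt a m - ∑ h, (cnt a h : ℝ) ^ 2) / n ^ 2 := by gcongr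
    _ = n - stepE a (fun b => (cnt b m : ℝ)) := (sub_stepE_cnt a m).symm

theorem sub_stepE_cnt_le {m : Fin k} {s : ℝ} (hs : ∀ h ≠ m, cnt a h + s ≤ cnt a m) :
    n - stepE a (fun b => (cnt b m : ℝ)) ≤
      (n - cnt a m : ℝ) * (1 - s * cnt a m / n ^ 2) := by
  have hgap : (n - cnt a m : ℝ) * s ≤ n * cnt a m - ∑ h, (cnt a h : ℝ) ^ 2 := by
    have hsum : ∑ h, (cnt a h : ℝ) = n := mod_cast sum_cnt a
    rw [← hsum]
    exact sum_sub_mul_le_sum_mul_sub_sum_sq (fun h => Nat.cast_nonneg (cnt a h)) hs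
  calc n - stepE a (fun b => (cnt b m : ℝ))
      = (n - cnt a m : ℝ) - cnt a m * (n * cnt a m - ∑ h, (cnt a h : ℝ) ^ 2) / n ^ 2 :=
        sub_stepE_cnt a m
    _ ≤ (n - cnt a m : ℝ) - cnt a m * ((n - cnt a m) * s) / n ^ 2 := by gcongr
    _ = (n - cnt a m : ℝ) * (1 - s * cnt a m / n ^ 2) := by ring

/-- The lead `s` of `m` over the other colors is signed: it is negative for a minority color. -/
theorem exp_minority_general {m : Fin k} {s : ℝ} (hs : ∀ h ≠ m, cnt a h + s ≤ cnt a m) :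
    (n - cnt a m : ℝ) * (1 - (cnt a m : ℝ) ^ 2 / n ^ 2) ≤ n - stepE a (fun b => (cnt b m : ℝ)) ∧
      n - stepE a (fun b => (cnt b m : ℝ)) ≤ (n - cnt a m : ℝ) * (1 - s * cnt a m / n ^ 2) :=
  ⟨le_sub_stepE_cnt a m, sub_stepE_cnt_le a hs⟩

end Step

/-- Lemma (exp-minority): for every `m ∈ M(c̄)`, the expected number of nodes not colored `m`
after one step, `μ̄_m(c̄) = n − μ_m(c̄)`, satisfies
`(n − c_m)·(1 − c_m²/n²) ≤ μ̄_m(c̄) ≤ (n − c_m)·(1 − s(c̄)·c_m/n²)`. -/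
theorem exp_minority (n k : ℕ) (hn : 1 ≤ n) (c : Fin k → ℕ) (hc : ∑ h, c h = n)
    (a : Fin n → Fin k) (ha : ∀ h, cnt a h = c h) (m : Fin k) (hm : m ∈ Mset c) :
    ((n : ℝ) - (c m : ℝ)) * (1 - (c m : ℝ) ^ 2 / (n : ℝ) ^ 2) ≤
        (n : ℝ) - stepE a (fun b => (cnt b m : ℝ)) ∧
      (n : ℝ) - stepE a (fun b => (cnt b m : ℝ)) ≤
        ((n : ℝ) - (c m : ℝ)) * (1 - (sval c : ℝ) * (c m : ℝ) / (n : ℝ) ^ 2) := by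
  have : NeZero n := ⟨Nat.one_le_iff_ne_zero.1 hn⟩
  obtain rfl : cnt a = c := funext ha
  exact exp_minority_general a fun h hh => mod_cast sval_add_le_of_mem_Mset hm hh
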